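/- Let n ≥ 1, k ≥ 2, and let δ be an increment function of size n. The left intervals of height k in the alt-Tamari poset Tam^δ_n are in bijection with sequences (P_0, P_1, …, P_k) of Dyck words, where P_0 is marked at one of its up steps and the sizes of P_0, …, P_k add up to n − k; in particular, the number of left intervals of height k in Tam^δ_n is binomial(2n−k, n+1), independently of δ. -/

import Mathlib

/-!
Common definitions.  A letter of a word is a `Bool`: `true` is an up step `u`,
`false` is a down step `d`.  Positions in words are 0-based.
-/

/-- A (possibly empty) Dyck word: as many `u`'s as `d`'s, and every
prefix has at least as many `u`'s as `d`'s. -/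
def IsDyckPath (w : List Bool) : Prop :=
  w.count true = w.count false ∧ ∀ p, p <+: w → p.count false ≤ p.count true

/-- A Dyck word of size `n`: `n` up steps, `n` down steps, every prefix has
at least as many `u`'s as `d`'s. -/
def IsDyckWord (n : ℕ) (w : List Bool) : Prop :=
  w.count true = n ∧ w.count false = n ∧ ∀ p, p <+: w → p.count false ≤ p.count true

/-- The set of Dyck words of size `n`. -/
def DyckSet (n : ℕ) : Set (List Bool) := {w | IsDyckWord n w}

/-- An increment function: a `{0,1}`-valued function (the paper's `δ : {1,…,n} → {0,1}`;
only the values on `{1,…,n}` are ever used). -/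
def IsIncFun (δ : ℕ → ℤ) : Prop := ∀ i, δ i = 0 ∨ δ i = 1

/-- The 0-based position in `w` of the `i`-th up step `u_i` (`i` is 1-based). -/
def upPos (w : List Bool) (i : ℕ) : ℕ :=
  ((List.range w.length).filter fun q => w.getD q false = true).getD (i - 1) 0

/-- `h_i(w)`: the (1-based, between 1 and 2n) position of the up step `u_i` in `w`. -/
def hpos (w : List Bool) (i : ℕ) : ℕ := upPos w i + 1

/-- The change of δ-altitude produced by the letter at position `q` of `w`:
the up step `u_i` contributes `δ i`, a down step contributes `-1`. -/
def stepVal (δ : ℕ → ℤ) (w : List Bool) (q : ℕ) : ℤ :=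
  if w.getD q false = true then δ ((w.take (q + 1)).count true) else -1

/-- The δ-elevation of the factor of `w` occupying positions `a, …, b-1`. -/
def elev (δ : ℕ → ℤ) (w : List Bool) (a b : ℕ) : ℤ :=
  ∑ q ∈ Finset.Ico a b, stepVal δ w q

/-- `C` is the δ-excursion of the up step of `w` at position `p`:
the smallest (nonempty) factor of `w` starting at `p` whose δ-elevation is `0`. -/
def IsDeltaExcAt (δ : ℕ → ℤ) (w : List Bool) (p : ℕ) (C : List Bool) : Prop :=
  w.getD p false = true ∧
  ∃ m, 0 < m ∧ p + m ≤ w.length ∧ C = (w.drop p).take m ∧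
    elev δ w p (p + m) = 0 ∧ ∀ m', 0 < m' → m' < m → elev δ w p (p + m') ≠ 0

/-- `C` is the excursion of the up step of `w` at position `p`: the smallest factor
of `w` starting at `p` that is itself a Dyck word. -/
def IsExcursionAt (w : List Bool) (p : ℕ) (C : List Bool) : Prop :=
  w.getD p false = true ∧
  ∃ m, 0 < m ∧ p + m ≤ w.length ∧ C = (w.drop p).take m ∧ IsDyckPath C ∧
    ∀ m', 0 < m' → m' < m → ¬ IsDyckPath ((w.drop p).take m')

/-- `ℓ_i(w; δ)`: the length of the δ-excursion of `u_i` in `w`. -/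
noncomputable def excLen (δ : ℕ → ℤ) (w : List Bool) (i : ℕ) : ℕ :=
  sInf {m | 0 < m ∧ elev δ w (upPos w i) (upPos w i + m) = 0}

/-- `Q` is the δ-rotation of `P` at some up step: `P = A d C B` with `d u_i` a valley
and `C` the δ-excursion of `u_i`, and `Q = A C d B`. -/
def DeltaRot (δ : ℕ → ℤ) (P Q : List Bool) : Prop :=
  ∃ A C B, P = A ++ false :: (C ++ B) ∧ Q = A ++ (C ++ false :: B) ∧
    IsDeltaExcAt δ P (A.length + 1) C

/-- The alt-Tamari order `Tam^δ`: reflexive transitive closure of δ-rotations. -/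
def altLE (δ : ℕ → ℤ) : List Bool → List Bool → Prop :=
  Relation.ReflTransGen (DeltaRot δ)

/-- The Tamari order: the alt-Tamari order for `δ ≡ 1` (the δ-excursion of any up step
is then its excursion). -/
def tamLE : List Bool → List Bool → Prop := altLE fun _ => 1

/-- The height (number of `u`'s minus number of `d`'s) of the length-`j` prefix of `w`. -/
def prefHeight (w : List Bool) (j : ℕ) : ℤ :=
  ((w.take j).count true : ℤ) - ((w.take j).count false : ℤ)

/-- The Dyck (inclusion) order: every prefix height of `P` is at most that of `Q`. -/
def dyckLE (P Q : List Bool) : Prop := ∀ j, prefHeight P j ≤ prefHeight Q j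

/-- Strict version of a relation `le`. -/
def ltOf (le : List Bool → List Bool → Prop) (P Q : List Bool) : Prop :=
  le P Q ∧ ¬ le Q P

/-- There is a strict chain `P = c 0 < c 1 < ⋯ < c k = Q` inside `S`. -/
def HasChainIn (S : Set (List Bool)) (le : List Bool → List Bool → Prop)
    (P Q : List Bool) (k : ℕ) : Prop :=
  ∃ c : ℕ → List Bool, c 0 = P ∧ c k = Q ∧ (∀ i ≤ k, c i ∈ S) ∧
    ∀ i < k, ltOf le (c i) (c (i + 1))

/-- The interval `[P,Q]` of the poset `(S, le)` has height `k`: `k` is the maximal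
length of a chain from `P` to `Q`. -/
def IntervalHeight (S : Set (List Bool)) (le : List Bool → List Bool → Prop)
    (P Q : List Bool) (k : ℕ) : Prop :=
  HasChainIn S le P Q k ∧ ∀ m, HasChainIn S le P Q m → m ≤ k

/-- The interval `[P,Q]` of the poset `(S, le)` is linear: it is totally ordered. -/
def LinearInterval (S : Set (List Bool)) (le : List Bool → List Bool → Prop)
    (P Q : List Bool) : Prop :=
  P ∈ S ∧ Q ∈ S ∧ le P Q ∧
  ∀ R R', R ∈ S → R' ∈ S → le P R → le R Q → le P R' → le R' Q → le R R' ∨ le R' R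

/-- `Q` covers `P` in the poset `(S, le)`. -/
def CovIn (S : Set (List Bool)) (le : List Bool → List Bool → Prop)
    (P Q : List Bool) : Prop :=
  P ∈ S ∧ Q ∈ S ∧ ltOf le P Q ∧ ∀ R ∈ S, ¬ (ltOf le P R ∧ ltOf le R Q)

/-- The number of valleys (factors `du`) of `w`. -/
def valleys (w : List Bool) : ℕ :=
  ((List.range w.length).filter fun q => !w.getD q true && w.getD (q + 1) false).length

/-! In a left interval `(A d^k C B, A C d^k B)` the first word, with its factor `d^k u` marked,
determines the second: `δ` only decides where the excursion `C` of that `u` ends, and rotating it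
past `d^k` keeps the word a Dyck word. So for every `δ` left intervals correspond to Dyck words with
a marked factor `d^k u`. Cutting `A` at its last passages through its `k` top heights yields
`A = A₀ u P_k ⋯ u P_1` with Dyck words `P_j`. The `k` up steps displayed here are matched with
`d^k`, and deleting all this leaves a Dyck word `P_0` with a marked up step.

If `F = 1 + X F²` is the Catalan series, such sequences `(P_0, …, P_k)` are counted by `X F' F^k`.
Multiplied by `X F' F^k`, the equation for `F` becomes Pascal's rule for the coefficients. -/

section Walks

/-- `IsWalk h w m`: as a path with up and down steps, the word `w` leads from height `h` to
height `m` without going below `0`. -/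
def IsWalk (h : ℕ) (w : List Bool) (m : ℕ) : Prop :=
  h + w.count true = m + w.count false ∧ ∀ p, p <+: w → p.count false ≤ h + p.count true

variable {h m k : ℕ} {v w : List Bool}

theorem isDyckPath_iff_isWalk : IsDyckPath w ↔ IsWalk 0 w 0 := by
  simp only [IsDyckPath, IsWalk, zero_add]

theorem isDyckWord_iff {n : ℕ} : IsDyckWord n w ↔ IsDyckPath w ∧ w.count true = n := by
  unfold IsDyckWord IsDyckPath
  constructor
  · rintro ⟨htrue, hfalse, hpre⟩
    exact ⟨⟨htrue.trans hfalse.symm, hpre⟩, htrue⟩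
  · rintro ⟨⟨heq, hpre⟩, htrue⟩
    exact ⟨htrue, heq ▸ htrue, hpre⟩

theorem isWalk_append_iff : IsWalk h (v ++ w) m ↔ ∃ l, IsWalk h v l ∧ IsWalk l w m := by
  simp only [IsWalk, List.count_append]
  constructor
  · rintro ⟨hend, hpre⟩
    have hv := hpre v (List.prefix_append v w)
    refine ⟨h + v.count true - v.count false,
      ⟨by lia, fun p hp ↦ hpre p (List.prefix_append_of_prefix hp)⟩, by lia, fun p hp ↦ ?_⟩
    have := hpre (v ++ p) ((List.prefix_append_right_inj v).2 hp)
    simp only [List.count_append] at this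
    lia
  · rintro ⟨l, ⟨hvend, hvpre⟩, hwend, hwpre⟩
    refine ⟨by lia, fun p hp ↦ ?_⟩
    obtain hpv | ⟨t, rfl⟩ := List.prefix_or_prefix_of_prefix hp (List.prefix_append v w)
    · exact hvpre p hpv
    · have := hwpre t ((List.prefix_append_right_inj v).1 hp)
      simp only [List.count_append]
      lia

theorem IsWalk.add_right (hw : IsWalk h w m) (c : ℕ) : IsWalk (h + c) w (m + c) :=
  ⟨by have := hw.1; lia, fun p hp ↦ by have := hw.2 p hp; lia⟩

theorem IsDyckPath.isWalk_iff (hw : IsDyckPath w) : IsWalk h w m ↔ m = h := by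
  refine ⟨fun hwalk ↦ ?_, ?_⟩
  · have := hwalk.1
    have := hw.1
    lia
  · rintro rfl
    simpa using (isDyckPath_iff_isWalk.1 hw).add_right m

theorem isWalk_singleton_true_iff : IsWalk h [true] m ↔ m = h + 1 := by
  simp [IsWalk, List.prefix_cons_iff, eq_comm]

theorem isWalk_replicate_false_iff : IsWalk h (List.replicate k false) m ↔ h = m + k := by
  simp only [IsWalk, List.prefix_replicate_iff, List.count_replicate]
  refine ⟨fun hwalk ↦ by simpa using hwalk.1, ?_⟩
  rintro rfl
  refine ⟨by simp, fun p hp ↦ ?_⟩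
  have := List.count_le_length (a := false) (l := p)
  lia

end Walks

section LastPassage

variable {k : ℕ}

theorem exists_eq_append_true_cons_isDyckPath {w s : List Bool} (hs : s <:+ w)
    (hlt : s.count false < s.count true) : ∃ A D, w = A ++ true :: D ∧ IsDyckPath D := by
  induction w generalizing s with
  | nil => simp [List.suffix_nil.1 hs] at hlt
  | cons x w ih =>
    by_cases hw : ∃ t, t <:+ w ∧ t.count false < t.count true
    · obtain ⟨t, ht, htlt⟩ := hw
      obtain ⟨A, D, rfl, hD⟩ := ih ht htlt
      exact ⟨x :: A, D, rfl, hD⟩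
    · push Not at hw
      obtain rfl := (List.suffix_cons_iff.1 hs).resolve_right fun hsw ↦ (hw s hsw).not_gt hlt
      have hle := hw w List.suffix_rfl
      obtain rfl : x = true := by grind
      refine ⟨[], w, rfl, by grind, ?_⟩
      rintro p ⟨t, rfl⟩
      have := hw t (List.suffix_append p t)
      grind

/-- The word `u D_{k-1} ⋯ u D_1 u D_0`, which climbs by `k` when all `D_j` are Dyck words; its
displayed up steps are the last passages through the `k` lower heights. -/
def upChain : {k : ℕ} → (Fin k → List Bool) → List Bool
  | 0, _ => []
  | _ + 1, D => upChain (Fin.tail D) ++ true :: D 0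

theorem append_true_cons_inj {A A' D D' : List Bool} (hD : IsDyckPath D)
    (hD' : IsDyckPath D') : A ++ true :: D = A' ++ true :: D' ↔ A = A' ∧ D = D' := by
  have hne : ∀ {E D D' : List Bool}, IsDyckPath D → IsDyckPath D' → D ≠ E ++ true :: D' := by
    rintro E D D' hD hD' rfl
    have hE := hD.2 E (List.prefix_append _ _)
    have hbal := hD.1
    have hbal' := hD'.1
    grind
  refine ⟨fun h ↦ ?_, by rintro ⟨rfl, rfl⟩; rfl⟩
  obtain ⟨_ | ⟨x, E⟩, rfl, hE⟩ | ⟨_ | ⟨x, E⟩, rfl, hE⟩ := List.append_eq_append_iff.1 h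
  · simpa [eq_comm] using hE
  · exact (hne hD hD' (List.cons.inj hE).2).elim
  · simpa [eq_comm] using hE
  · exact (hne hD' hD (List.cons.inj hE).2).elim

theorem count_true_upChain (D : Fin k → List Bool) :
    (upChain D).count true = k + ∑ j, (D j).count true := by
  induction k with
  | zero => simp [upChain]
  | succ k ih =>
    simp only [upChain, List.count_append, ih, Fin.tail, List.count_cons_self, Fin.sum_univ_succ]
    lia

theorem isWalk_upChain_iff {D : Fin k → List Bool} (hD : ∀ j, IsDyckPath (D j)) {h m : ℕ} :
    IsWalk h (upChain D) m ↔ m = h + k := by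
  induction k generalizing m with
  | zero => simp [upChain, IsWalk, eq_comm]
  | succ k ih =>
    rw [upChain, ← List.singleton_append]
    simp only [isWalk_append_iff, ih (D := Fin.tail D) fun j ↦ hD j.succ, isWalk_singleton_true_iff,
      (hD 0).isWalk_iff, exists_eq_left, add_assoc]

theorem exists_eq_append_upChain {A : List Bool} (hA : A.count false + k ≤ A.count true) :
    ∃ A₀, ∃ D : Fin k → List Bool, A = A₀ ++ upChain D ∧ ∀ j, IsDyckPath (D j) := by
  induction k generalizing A with
  | zero => exact ⟨A, Fin.elim0, (List.append_nil A).symm, fun j ↦ j.elim0⟩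
  | succ k ih =>
    obtain ⟨A', D, rfl, hD⟩ :=
      exists_eq_append_true_cons_isDyckPath (List.suffix_refl A) (by lia)
    have hbal := hD.1
    obtain ⟨A₀, D', rfl, hD'⟩ := ih (A := A') (by grind)
    exact ⟨A₀, Fin.cons D D', by simp [upChain], Fin.cases hD hD'⟩

theorem append_upChain_inj {A A' : List Bool} {D D' : Fin k → List Bool}
    (hD : ∀ j, IsDyckPath (D j)) (hD' : ∀ j, IsDyckPath (D' j)) :
    A ++ upChain D = A' ++ upChain D' ↔ A = A' ∧ D = D' := by
  induction k with
  | zero => simp [upChain, Subsingleton.elim D D']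
  | succ k ih =>
    rw [upChain, upChain, ← List.append_assoc, ← List.append_assoc,
      append_true_cons_inj (hD 0) (hD' 0),
      ih (D := Fin.tail D) (D' := Fin.tail D') (fun j ↦ hD j.succ) (fun j ↦ hD' j.succ),
      and_assoc, ← Fin.cons_self_tail D, ← Fin.cons_self_tail D', Fin.cons_inj]
    simp only [Fin.tail_cons, Fin.cons_zero, and_comm]

theorem isDyckPath_append_upChain_replicate_iff {D : Fin k → List Bool}
    (hD : ∀ j, IsDyckPath (D j)) (A B : List Bool) :
    IsDyckPath ((A ++ upChain D) ++ (List.replicate k false ++ B)) ↔ IsDyckPath (A ++ B) := by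
  simp [isDyckPath_iff_isWalk, isWalk_append_iff, isWalk_upChain_iff hD, isWalk_replicate_false_iff]

theorem count_true_append_upChain_replicate (D : Fin k → List Bool) (A B : List Bool) :
    ((A ++ upChain D) ++ (List.replicate k false ++ B)).count true =
      (A ++ B).count true + ∑ j, (D j).count true + k := by
  grind [count_true_upChain]

end LastPassage

section MarkedDescents

variable {k : ℕ}

/-- `(P₀, P₁, …, P_k)` is a sequence of Dyck words of total size `N` in which `P₀` is marked at
one of its up steps; the mark is the position of that up step. -/
def IsMarkedDyckSeq (N : ℕ) (s : (List Bool × ℕ) × (Fin k → List Bool)) : Prop :=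
  IsDyckPath s.1.1 ∧ s.1.1.getD s.1.2 false = true ∧ (∀ j, IsDyckPath (s.2 j)) ∧
    s.1.1.count true + ∑ j, (s.2 j).count true = N

/-- The pair `(A, B)` encodes a Dyck word `A d^k u B` of size `n` with a marked factor `d^k u`. -/
def IsMarkedDescent (n k : ℕ) (x : List Bool × List Bool) : Prop :=
  IsDyckWord n (x.1 ++ (List.replicate k false ++ true :: x.2))

theorem getD_eq_iff {α : Type*} {a d : α} (hda : d ≠ a) {l : List α} {p : ℕ} :
    l.getD p d = a ↔ ∃ A B, l = A ++ a :: B ∧ A.length = p := by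
  constructor
  · intro hp
    have hlt : p < l.length :=
      lt_of_not_ge fun hle ↦ hda ((List.getD_eq_default _ _ hle).symm.trans hp)
    rw [List.getD_eq_getElem _ _ hlt] at hp
    exact ⟨l.take p, l.drop (p + 1), by rw [← hp, List.getElem_cons_drop, List.take_append_drop],
      List.length_take_of_le hlt.le⟩
  · rintro ⟨A, B, rfl, rfl⟩
    simp

theorem isMarkedDescent_append_upChain_iff {n : ℕ} {D : Fin k → List Bool}
    (hD : ∀ j, IsDyckPath (D j)) (A B : List Bool) :
    IsMarkedDescent n k (A ++ upChain D, B) ↔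
      IsMarkedDyckSeq (n - k) ((A ++ true :: B, A.length), D) := by
  have hpos : 0 < (A ++ true :: B).count true := List.count_pos_iff.2 (by simp)
  have hsize : (A ++ true :: B).count true + ∑ j, (D j).count true + k = n ↔
      (A ++ true :: B).count true + ∑ j, (D j).count true = n - k := by lia
  rw [IsMarkedDescent, isDyckWord_iff, isDyckPath_append_upChain_replicate_iff hD,
    count_true_append_upChain_replicate, hsize, IsMarkedDyckSeq]
  simp [hD]

/-- The chain matched with the descent `d^k` is inserted before the marked up step. -/
noncomputable def markedDyckSeqEquivMarkedDescent (n k : ℕ) :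
    {s : (List Bool × ℕ) × (Fin k → List Bool) // IsMarkedDyckSeq (n - k) s} ≃
      {x // IsMarkedDescent n k x} :=
  Equiv.ofBijective
    (fun s ↦ ⟨(s.1.1.1.take s.1.1.2 ++ upChain s.1.2, s.1.1.1.drop (s.1.1.2 + 1)), by
      obtain ⟨⟨⟨w, p⟩, D⟩, hs⟩ := s
      obtain ⟨A, B, rfl, rfl⟩ := (getD_eq_iff Bool.false_ne_true).1 hs.2.1
      simpa using (isMarkedDescent_append_upChain_iff hs.2.2.1 A B).2 hs⟩) (by
    constructor
    · rintro ⟨⟨⟨w, p⟩, D⟩, _, hp, hD, _⟩ ⟨⟨⟨w', p'⟩, D'⟩, _, hp', hD', _⟩ h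
      obtain ⟨A, B, rfl, rfl⟩ := (getD_eq_iff Bool.false_ne_true).1 hp
      obtain ⟨A', B', rfl, rfl⟩ := (getD_eq_iff Bool.false_ne_true).1 hp'
      obtain ⟨⟨rfl, rfl⟩, rfl⟩ : (A = A' ∧ D = D') ∧ B = B' := by
        simpa [append_upChain_inj hD hD'] using h
      rfl
    · rintro ⟨⟨A, B⟩, hx⟩
      have hA : A.count false + k ≤ A.count true := by
        simpa [List.count_replicate] using hx.2.2 (A ++ List.replicate k false) (by simp)
      obtain ⟨A₀, D, rfl, hD⟩ := exists_eq_append_upChain hA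
      exact ⟨⟨_, (isMarkedDescent_append_upChain_iff hD A₀ B).1 hx⟩, by simp⟩)

end MarkedDescents

section Excursions

theorem exists_eq_zero_of_sub_one_le {f : ℕ → ℤ} {N : ℕ} (hstart : 0 ≤ f 0)
    (hstep : ∀ m, f m - 1 ≤ f (m + 1)) (hend : f N ≤ 0) : ∃ m ≤ N, f m = 0 := by
  induction N with
  | zero => exact ⟨0, le_rfl, le_antisymm hend hstart⟩
  | succ N ih =>
    rcases le_or_gt (f N) 0 with hfN | hfN
    · obtain ⟨m, hmN, hfm⟩ := ih hfN
      exact ⟨m, hmN.trans N.le_succ, hfm⟩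
    · have := hstep N
      exact ⟨N + 1, le_rfl, by lia⟩

variable {δ : ℕ → ℤ} {w : List Bool} {p : ℕ}

theorem elev_add_one (δ : ℕ → ℤ) (w : List Bool) (p m : ℕ) :
    elev δ w p (p + (m + 1)) = elev δ w p (p + m) + stepVal δ w (p + m) :=
  Finset.sum_Ico_succ_top (Nat.le_add_right p m) _

theorem IsIncFun.neg_one_le_stepVal (hδ : IsIncFun δ) (w : List Bool) (q : ℕ) :
    -1 ≤ stepVal δ w q := by
  have := hδ ((w.take (q + 1)).count true)
  unfold stepVal
  split <;> lia

theorem IsIncFun.stepVal_le (hδ : IsIncFun δ) (w : List Bool) (q : ℕ) :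
    stepVal δ w q ≤ prefHeight w (q + 1) - prefHeight w q := by
  have hδ_le : δ ((w.take (q + 1)).count true) ≤ 1 := by
    have := hδ ((w.take (q + 1)).count true)
    lia
  unfold stepVal prefHeight
  generalize δ ((w.take (q + 1)).count true) = c at hδ_le ⊢
  rw [List.take_add_one, List.getD_eq_getElem?_getD]
  rcases w[q]? with _ | _ | _ <;> simp [hδ_le]

theorem IsIncFun.elev_le (hδ : IsIncFun δ) (w : List Bool) {a b : ℕ} (hab : a ≤ b) :
    elev δ w a b ≤ prefHeight w b - prefHeight w a :=
  (Finset.sum_le_sum fun q _ ↦ hδ.stepVal_le w q).trans_eq (Finset.sum_Ico_sub _ hab)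

theorem IsDyckPath.prefHeight_nonneg (hw : IsDyckPath w) (j : ℕ) : 0 ≤ prefHeight w j := by
  have := hw.2 (w.take j) (w.take_prefix j)
  unfold prefHeight
  lia

theorem IsDyckPath.prefHeight_length (hw : IsDyckPath w) : prefHeight w w.length = 0 := by
  simp [prefHeight, hw.1]

/-- The length of the `δ`-excursion starting at position `p` of `w`, or `0` if there is none. -/
noncomputable def excursionLength (δ : ℕ → ℤ) (w : List Bool) (p : ℕ) : ℕ :=
  sInf {m | 0 < m ∧ elev δ w p (p + m) = 0}

theorem exists_elev_eq_zero (hδ : IsIncFun δ) (hw : IsDyckPath w)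
    (hp : w.getD p false = true) :
    ∃ m, 0 < m ∧ m ≤ w.length - p ∧ elev δ w p (p + m) = 0 := by
  have hlt : p < w.length := by
    obtain ⟨A, B, rfl, rfl⟩ := (getD_eq_iff Bool.false_ne_true).1 hp
    simp
  obtain ⟨L, hL⟩ := Nat.exists_eq_add_one.2 (Nat.sub_pos_of_lt hlt)
  have hstart : 0 ≤ elev δ w p (p + 1) := by
    have hone : elev δ w p (p + 1) = δ ((w.take (p + 1)).count true) := by
      simp [elev, stepVal, hp, -List.getD_eq_getElem?_getD]
    have := hδ ((w.take (p + 1)).count true)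
    lia
  have hstep (m : ℕ) : elev δ w p (p + (m + 1)) - 1 ≤ elev δ w p (p + (m + 1 + 1)) := by
    have := hδ.neg_one_le_stepVal w (p + (m + 1))
    rw [elev_add_one δ w p (m + 1)]
    lia
  have hend : elev δ w p (p + (L + 1)) ≤ 0 := by
    have hle := hδ.elev_le w hlt.le
    rw [hw.prefHeight_length] at hle
    rw [← hL, Nat.add_sub_cancel' hlt.le]
    exact hle.trans (sub_nonpos.2 (hw.prefHeight_nonneg p))
  obtain ⟨m, hm, hzero⟩ :=
    exists_eq_zero_of_sub_one_le (f := fun m ↦ elev δ w p (p + (m + 1))) hstart hstep hend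
  exact ⟨m + 1, m.succ_pos, by lia, hzero⟩

theorem excursionLength_spec {m : ℕ} (hm : 0 < m) (hzero : elev δ w p (p + m) = 0) :
    0 < excursionLength δ w p ∧ elev δ w p (p + excursionLength δ w p) = 0 :=
  Nat.sInf_mem (s := {m | 0 < m ∧ elev δ w p (p + m) = 0}) ⟨m, hm, hzero⟩

theorem excursionLength_le {m : ℕ} (hm : 0 < m) (hzero : elev δ w p (p + m) = 0) :
    excursionLength δ w p ≤ m :=
  Nat.sInf_le ⟨hm, hzero⟩

theorem isDeltaExcAt_take_drop (hδ : IsIncFun δ) (hw : IsDyckPath w)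
    (hp : w.getD p false = true) :
    IsDeltaExcAt δ w p ((w.drop p).take (excursionLength δ w p)) := by
  obtain ⟨m, hm, hmle, hzero⟩ := exists_elev_eq_zero hδ hw hp
  obtain ⟨hpos, hexc⟩ := excursionLength_spec hm hzero
  have hle := excursionLength_le hm hzero
  exact ⟨hp, _, hpos, by lia, rfl, hexc,
    fun m' hm' hlt hzero' ↦ (excursionLength_le hm' hzero').not_gt hlt⟩

theorem IsDeltaExcAt.length_eq {C : List Bool} (hC : IsDeltaExcAt δ w p C) :
    C.length = excursionLength δ w p := by
  obtain ⟨-, m, hm, hle, rfl, hzero, hmin⟩ := hC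
  obtain ⟨hpos, hexc⟩ := excursionLength_spec hm hzero
  have hlen : excursionLength δ w p = m :=
    (excursionLength_le hm hzero).antisymm (not_lt.1 fun hlt ↦ hmin _ hpos hlt hexc)
  rw [hlen, List.length_take, List.length_drop]
  lia

theorem IsDeltaExcAt.exists_eq_true_cons {C : List Bool} (hC : IsDeltaExcAt δ w p C) :
    ∃ E, C = true :: E := by
  obtain ⟨hp, m, hm, -, rfl, -⟩ := hC
  obtain ⟨A, B, rfl, rfl⟩ := (getD_eq_iff Bool.false_ne_true).1 hp
  obtain ⟨m, rfl⟩ := Nat.exists_eq_add_one.2 hm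
  exact ⟨B.take m, by simp⟩

end Excursions

section LeftIntervals

variable {δ : ℕ → ℤ} {n k : ℕ} {A B C : List Bool}

/-- `(P, Q)` is a left interval of height `k` in `Tam^δ_n`. For `k = 1` these are the pairs in
which `Q` is a `δ`-rotation of `P`. -/
def IsLeftInterval (δ : ℕ → ℤ) (n k : ℕ) (pq : List Bool × List Bool) : Prop :=
  IsDyckWord n pq.1 ∧ IsDyckWord n pq.2 ∧
    ∃ A C B : List Bool,
      pq.1 = A ++ (List.replicate k false ++ (C ++ B)) ∧
      pq.2 = A ++ (C ++ (List.replicate k false ++ B)) ∧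
      IsDeltaExcAt δ pq.1 (A.length + k) C

theorem IsDyckWord.rotate (h : IsDyckWord n (A ++ (List.replicate k false ++ (C ++ B)))) :
    IsDyckWord n (A ++ (C ++ (List.replicate k false ++ B))) := by
  rw [isDyckWord_iff, isDyckPath_iff_isWalk] at h ⊢
  refine ⟨?_, by grind⟩
  simp only [isWalk_append_iff, isWalk_replicate_false_iff] at h ⊢
  obtain ⟨⟨_, hA, b, rfl, c, hC, hB⟩, -⟩ := h
  exact ⟨b + k, hA, c + k, hC.add_right k, c, rfl, hB⟩

theorem eq_of_append_cons_eq_of_ne {α : Type*} {a b : α} (hab : a ≠ b) {A A' R R' S S' : List α}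
    (hR : A ++ a :: R = A' ++ a :: R') (hS : A ++ b :: S = A' ++ b :: S') : A = A' := by
  induction A generalizing A' with
  | nil => cases A' <;> grind
  | cons x A ih => cases A' <;> grind

/-- The pair `(A d^k C B', A C d^k B')` obtained from the marked descent `(A, B)`, where
`u B = C B'` and `C` is the `δ`-excursion of the first up step of `C`. -/
noncomputable def rotationPair (δ : ℕ → ℤ) (k : ℕ) (x : List Bool × List Bool) :
    List Bool × List Bool :=
  let P := x.1 ++ (List.replicate k false ++ true :: x.2)
  let L := excursionLength δ P (x.1.length + k)
  (P, x.1 ++ ((true :: x.2).take L ++ (List.replicate k false ++ (true :: x.2).drop L)))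

theorem rotationPair_append {E : List Bool}
    (hC : IsDeltaExcAt δ (A ++ (List.replicate k false ++ true :: (E ++ B))) (A.length + k)
      (true :: E)) :
    rotationPair δ k (A, E ++ B) = (A ++ (List.replicate k false ++ true :: (E ++ B)),
      A ++ (true :: E ++ (List.replicate k false ++ B))) := by
  simp [rotationPair, ← hC.length_eq]

theorem IsMarkedDescent.exists_isDeltaExcAt (hδ : IsIncFun δ) (h : IsMarkedDescent n k (A, B)) :
    ∃ E B', B = E ++ B' ∧
      IsDeltaExcAt δ (A ++ (List.replicate k false ++ true :: (E ++ B'))) (A.length + k)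
        (true :: E) := by
  have hC := isDeltaExcAt_take_drop (p := A.length + k) hδ (isDyckWord_iff.1 h).1 (by simp)
  obtain ⟨E, hE⟩ := hC.exists_eq_true_cons
  rw [hE] at hC
  rw [← List.append_assoc, List.drop_left' (by simp)] at hE
  obtain ⟨B', hB'⟩ : true :: E <+: true :: B := hE ▸ List.take_prefix _ _
  obtain rfl : E ++ B' = B := (List.cons.inj hB').2
  exact ⟨E, B', rfl, hC⟩

theorem IsMarkedDescent.isLeftInterval_rotationPair (hδ : IsIncFun δ) {x : List Bool × List Bool}
    (hx : IsMarkedDescent n k x) : IsLeftInterval δ n k (rotationPair δ k x) := by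
  obtain ⟨A, B⟩ := x
  obtain ⟨E, B', rfl, hC⟩ := hx.exists_isDeltaExcAt hδ
  rw [rotationPair_append hC]
  exact ⟨hx, IsDyckWord.rotate (C := true :: E) hx, A, true :: E, B', rfl, rfl, hC⟩

theorem injOn_rotationPair (hδ : IsIncFun δ) (hk : 0 < k) :
    Set.InjOn (rotationPair δ k) {x | IsMarkedDescent n k x} := by
  rintro ⟨A₁, B₁⟩ hx₁ ⟨A₂, B₂⟩ hx₂ h
  obtain ⟨E₁, B₁', rfl, hC₁⟩ := IsMarkedDescent.exists_isDeltaExcAt hδ hx₁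
  obtain ⟨E₂, B₂', rfl, hC₂⟩ := IsMarkedDescent.exists_isDeltaExcAt hδ hx₂
  rw [rotationPair_append hC₁, rotationPair_append hC₂] at h
  obtain ⟨hP, hQ⟩ := Prod.mk.inj h
  obtain ⟨k, rfl⟩ := Nat.exists_eq_add_one.2 hk
  obtain rfl : A₁ = A₂ := eq_of_append_cons_eq_of_ne Bool.false_ne_true hP hQ
  simpa using hP

theorem IsLeftInterval.exists_rotationPair_eq {pq : List Bool × List Bool}
    (h : IsLeftInterval δ n k pq) : ∃ x, IsMarkedDescent n k x ∧ rotationPair δ k x = pq := by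
  obtain ⟨P, Q⟩ := pq
  obtain ⟨hP, -, A, C, B, rfl, rfl, hC⟩ := h
  obtain ⟨E, rfl⟩ := hC.exists_eq_true_cons
  exact ⟨(A, E ++ B), hP, rotationPair_append hC⟩

/-- Rotating the excursion that follows a marked descent to the left of it. -/
noncomputable def markedDescentEquivLeftInterval (hδ : IsIncFun δ) (n : ℕ) (hk : 0 < k) :
    {x // IsMarkedDescent n k x} ≃ {pq // IsLeftInterval δ n k pq} :=
  Equiv.ofBijective (fun x ↦ ⟨rotationPair δ k x.1, x.2.isLeftInterval_rotationPair hδ⟩)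
    ⟨fun x y h ↦ Subtype.ext (injOn_rotationPair hδ hk x.2 y.2 (congrArg Subtype.val h)),
      fun pq ↦ by
        obtain ⟨x, hx, hpq⟩ := pq.2.exists_rotationPair_eq
        exact ⟨⟨x, hx⟩, Subtype.ext hpq⟩⟩

end LeftIntervals

section GeneratingFunctions

open PowerSeries

/-- `F` is the ordinary generating function of the combinatorial class `α` with size function `f`:
there are finitely many objects of each size `n`, and `coeff n F` is their number. -/
def HasGenFun {α : Type*} (f : α → ℕ) (F : ℕ⟦X⟧) : Prop :=
  ∀ n, Finite {a // f a = n} ∧ Nat.card {a // f a = n} = coeff n F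

variable {α β : Type*} {f : α → ℕ} {g : β → ℕ} {F G : ℕ⟦X⟧}

theorem HasGenFun.of_equiv (hg : HasGenFun g G) (e : α ≃ β) (h : ∀ a, g (e a) = f a) :
    HasGenFun f G := fun n ↦ by
  have e' : {a // f a = n} ≃ {b // g b = n} := e.subtypeEquiv fun a ↦ by rw [h]
  have := (hg n).1
  exact ⟨Finite.of_equiv _ e'.symm, (Nat.card_congr e').trans (hg n).2⟩

/-- Pairs of total size `n`, split according to the sizes of their components. -/
def subtypeAddEqEquivSigma (f : α → ℕ) (g : β → ℕ) (n : ℕ) :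
    {x : α × β // f x.1 + g x.2 = n} ≃
      Σ ij : Finset.HasAntidiagonal.antidiagonal n, {a // f a = ij.1.1} × {b // g b = ij.1.2} where
  toFun x := ⟨⟨(f x.1.1, g x.1.2), Finset.HasAntidiagonal.mem_antidiagonal.2 x.2⟩,
    ⟨x.1.1, rfl⟩, ⟨x.1.2, rfl⟩⟩
  invFun y := ⟨(y.2.1.1, y.2.2.1), by
    rw [y.2.1.2, y.2.2.2, ← Finset.HasAntidiagonal.mem_antidiagonal]
    exact y.1.2⟩
  left_inv _ := rfl
  right_inv := by
    rintro ⟨⟨⟨i, j⟩, _⟩, ⟨a, ha⟩, ⟨b, hb⟩⟩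
    change f a = i at ha
    change g b = j at hb
    subst ha hb
    rfl

theorem HasGenFun.prod (hf : HasGenFun f F) (hg : HasGenFun g G) :
    HasGenFun (fun x : α × β ↦ f x.1 + g x.2) (F * G) := fun n ↦ by
  have := fun i ↦ (hf i).1
  have := fun j ↦ (hg j).1
  refine ⟨Finite.of_equiv _ (subtypeAddEqEquivSigma f g n).symm, ?_⟩
  rw [Nat.card_congr (subtypeAddEqEquivSigma f g n), Nat.card_sigma, coeff_mul]
  simp only [Nat.card_prod, (hf _).2, (hg _).2]
  exact Finset.sum_coe_sort (Finset.HasAntidiagonal.antidiagonal n)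
    fun ij ↦ coeff ij.1 F * coeff ij.2 G

theorem HasGenFun.pow (hf : HasGenFun f F) (k : ℕ) :
    HasGenFun (fun x : Fin k → α ↦ ∑ j, f (x j)) (F ^ k) := by
  induction k with
  | zero =>
    intro n
    simp only [Finset.univ_eq_empty, Finset.sum_empty, pow_zero, coeff_one]
    exact ⟨inferInstance, by obtain rfl | hn := eq_or_ne n 0 <;> simp_all [eq_comm]⟩
  | succ k ih =>
    rw [pow_succ']
    exact (hf.prod ih).of_equiv (Fin.consEquiv fun _ ↦ α).symm 
      fun x ↦ (Fin.sum_univ_succ fun j ↦ f (x j)).symm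

theorem coeff_X_mul_derivative (n : ℕ) (F : ℕ⟦X⟧) :
    coeff n (X * d⁄dX ℕ F) = n * coeff n F := by
  cases n with
  | zero => simp
  | succ n => rw [coeff_succ_X_mul, coeff_derivative, mul_comm]; norm_cast

/-- Pointing: marking one of the `f a` atoms of each object `a` corresponds to `X * d/dX`. -/
theorem HasGenFun.sigma {M : α → Type*} [∀ a, Finite (M a)] (hf : HasGenFun f F)
    (hM : ∀ a, Nat.card (M a) = f a) :
    HasGenFun (fun x : Σ a, M a ↦ f x.1) (X * d⁄dX ℕ F) := fun n ↦ by
  have := (hf n).1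
  have := Fintype.ofFinite {a // f a = n}
  have e := Equiv.subtypeSigmaEquiv M (f · = n)
  refine ⟨Finite.of_equiv _ e.symm, ?_⟩
  rw [Nat.card_congr e, Nat.card_sigma,
    Finset.sum_congr rfl fun (a : {a // f a = n}) _ ↦ (hM a).trans a.2, Finset.sum_const,
    Finset.card_univ, ← Nat.card_eq_fintype_card, (hf n).2, coeff_X_mul_derivative, smul_eq_mul,
    mul_comm]

end GeneratingFunctions

section Counting

open PowerSeries

theorem finite_getD_eq {α : Type*} {a d : α} (hda : d ≠ a) (l : List α) :
    Finite {p // l.getD p d = a} :=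
  (Set.finite_lt_nat l.length).subset fun p hp ↦ by
    obtain ⟨A, B, rfl, rfl⟩ := (getD_eq_iff hda).1 hp
    simp

theorem card_getD_eq {α : Type*} [DecidableEq α] {a d : α} (hda : d ≠ a) (l : List α) :
    Nat.card {p // l.getD p d = a} = l.count a := by
  have hmem : ∀ p, p ∈ (Finset.range l.length).filter (l.getD · d = a) ↔ l.getD p d = a := by
    intro p
    rw [Finset.mem_filter, Finset.mem_range, and_iff_right_iff_imp]
    intro hp
    obtain ⟨A, B, rfl, rfl⟩ := (getD_eq_iff hda).1 hp
    simp
  rw [Nat.subtype_card _ hmem, Finset.card_filter]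
  clear hmem
  induction l with
  | nil => simp
  | cons x l ih =>
    rw [List.length_cons, Finset.sum_range_succ', List.count_cons]
    simp only [List.getD_cons_succ, ih, List.getD_cons_zero, beq_iff_eq]

/-- The letters of `DyckWord` as the letters of the words above. -/
def dyckStepEquivBool : DyckStep ≃ Bool where
  toFun s := decide (s = DyckStep.U)
  invFun b := if b then DyckStep.U else DyckStep.D
  left_inv s := by cases s <;> rfl
  right_inv b := by cases b <;> rfl

theorem count_true_map_dyckStepEquivBool (l : List DyckStep) :
    (l.map dyckStepEquivBool).count true = l.count DyckStep.U :=
  List.count_map_of_injective l _ dyckStepEquivBool.injective DyckStep.U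

theorem count_false_map_dyckStepEquivBool (l : List DyckStep) :
    (l.map dyckStepEquivBool).count false = l.count DyckStep.D :=
  List.count_map_of_injective l _ dyckStepEquivBool.injective DyckStep.D

theorem isDyckPath_map_dyckStepEquivBool_iff (l : List DyckStep) :
    IsDyckPath (l.map dyckStepEquivBool) ↔
      l.count DyckStep.U = l.count DyckStep.D ∧
        ∀ i, (l.take i).count DyckStep.D ≤ (l.take i).count DyckStep.U := by
  simp only [IsDyckPath, count_true_map_dyckStepEquivBool, count_false_map_dyckStepEquivBool]
  refine and_congr_right fun _ ↦ ⟨fun h i ↦ ?_, fun h p hp ↦ ?_⟩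
  · simpa only [count_true_map_dyckStepEquivBool, count_false_map_dyckStepEquivBool] using
      h _ ((List.take_prefix i l).map dyckStepEquivBool)
  · rw [List.prefix_iff_eq_take.1 hp, ← List.map_take]
    simpa only [count_true_map_dyckStepEquivBool, count_false_map_dyckStepEquivBool] using h _

/-- Mathlib's Dyck words, which are lists of `DyckStep`s, as Dyck paths in the letters `true`
and `false`. -/
def dyckWordEquivDyckPath : DyckWord ≃ {w // IsDyckPath w} where
  toFun p := ⟨p.toList.map dyckStepEquivBool, (isDyckPath_map_dyckStepEquivBool_iff _).2
    ⟨p.count_U_eq_count_D, p.count_D_le_count_U⟩⟩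
  invFun w :=
    have hw : (w.1.map dyckStepEquivBool.symm).map dyckStepEquivBool = w.1 := by simp
    have h := (isDyckPath_map_dyckStepEquivBool_iff _).1 (hw.symm ▸ w.2)
    ⟨w.1.map dyckStepEquivBool.symm, h.1, h.2⟩
  left_inv p := by simp
  right_inv w := by simp

theorem hasGenFun_semilength : HasGenFun DyckWord.semilength catalanSeries := fun n ↦
  ⟨inferInstance, by rw [Nat.card_eq_fintype_card, DyckWord.card_dyckWord_semilength_eq_catalan,
    catalanSeries_coeff]⟩

theorem hasGenFun_isDyckPath :
    HasGenFun (fun w : {w // IsDyckPath w} ↦ w.1.count true) catalanSeries :=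
  hasGenFun_semilength.of_equiv dyckWordEquivDyckPath.symm fun w ↦ by
    obtain ⟨p, rfl⟩ := dyckWordEquivDyckPath.surjective w
    rw [Equiv.symm_apply_apply]
    exact (count_true_map_dyckStepEquivBool _).symm

/-- Marked Dyck sequences, regrouped as a Dyck path with a mark and a tuple of Dyck paths. -/
def markedDyckSeqEquiv (k N : ℕ) :
    {s : (List Bool × ℕ) × (Fin k → List Bool) // IsMarkedDyckSeq N s} ≃
      {x : (Σ w : {w // IsDyckPath w}, {p // w.1.getD p false = true}) ×
          (Fin k → {w // IsDyckPath w}) //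
        x.1.1.1.count true + ∑ j, (x.2 j).1.count true = N} where
  toFun s := ⟨(⟨⟨s.1.1.1, s.2.1⟩, ⟨s.1.1.2, s.2.2.1⟩⟩, fun j ↦ ⟨s.1.2 j, s.2.2.2.1 j⟩),
    s.2.2.2.2⟩
  invFun x := ⟨((x.1.1.1.1, x.1.1.2.1), fun j ↦ (x.1.2 j).1),
    x.1.1.1.2, x.1.1.2.2, fun j ↦ (x.1.2 j).2, x.2⟩
  left_inv _ := rfl
  right_inv _ := rfl

theorem card_isMarkedDyckSeq (k N : ℕ) :
    Nat.card {s : (List Bool × ℕ) × (Fin k → List Bool) // IsMarkedDyckSeq N s} =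
      coeff N (X * d⁄dX ℕ catalanSeries * catalanSeries ^ k) := by
  have := fun w : {w // IsDyckPath w} ↦ finite_getD_eq Bool.false_ne_true w.1
  have hmarked := hasGenFun_isDyckPath.sigma fun w ↦ card_getD_eq Bool.false_ne_true w.1
  rw [Nat.card_congr (markedDyckSeqEquiv k N)]
  exact ((hmarked.prod (hasGenFun_isDyckPath.pow k)) N).2

theorem mul_catalan_eq_choose (n : ℕ) : n * catalan n = (2 * n).choose (n + 1) := by
  refine Nat.eq_of_mul_eq_mul_right n.succ_pos ?_
  calc n * catalan n * (n + 1) = (n + 1) * catalan n * n := by ring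
    _ = (2 * n).choose n * (2 * n - n) := by
      rw [succ_mul_catalan_eq_centralBinom, Nat.centralBinom_eq_two_mul_choose, two_mul,
        Nat.add_sub_cancel]
    _ = (2 * n).choose (n + 1) * (n + 1) := (Nat.choose_succ_right_eq _ n).symm

theorem coeff_X_mul_derivative_catalanSeries_mul_pow (k N : ℕ) :
    coeff N (X * d⁄dX ℕ catalanSeries * catalanSeries ^ k) = (2 * N + k).choose (N + k + 1) := by
  induction N generalizing k with
  | zero => simp [mul_assoc]
  | succ N ihN =>
    induction k with
    | zero => simp [coeff_X_mul_derivative, mul_catalan_eq_choose, -coeff_succ_X_mul]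
    | succ k ihk =>
      have hrec : catalanSeries ^ (k + 1) = catalanSeries ^ k + catalanSeries ^ (k + 2) * X := by
        calc catalanSeries ^ (k + 1) = catalanSeries ^ k * (catalanSeries ^ 2 * X + 1) := by
              rw [catalanSeries_sq_mul_X_add_one, pow_succ]
          _ = _ := by ring
      rw [hrec, mul_add, map_add, ihk, ← mul_assoc, coeff_succ_mul_X, ihN,
        show 2 * (N + 1) + (k + 1) = (2 * N + k + 2) + 1 by ring,
        Nat.choose_succ_succ' (2 * N + k + 2) (N + 1 + (k + 1))]
      ring_nf

end Counting

theorem stmt18_general (n : ℕ) {k : ℕ} (hk : 0 < k) {δ : ℕ → ℤ} (hδ : IsIncFun δ) :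
    Nonempty ({pq // IsLeftInterval δ n k pq} ≃
      {s : (List Bool × ℕ) × (Fin k → List Bool) // IsMarkedDyckSeq (n - k) s}) ∧
    {pq | IsLeftInterval δ n k pq}.ncard = (2 * n - k).choose (n + 1) := by
  have e := (markedDescentEquivLeftInterval hδ n hk).symm.trans
    (markedDyckSeqEquivMarkedDescent n k).symm
  refine ⟨⟨e⟩, ?_⟩
  calc {pq | IsLeftInterval δ n k pq}.ncard = _ := Nat.card_congr e
    _ = (2 * (n - k) + k).choose (n - k + k + 1) := by
      rw [card_isMarkedDyckSeq, coeff_X_mul_derivative_catalanSeries_mul_pow]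
    _ = (2 * n - k).choose (n + 1) := by
      rcases le_or_gt k n with hkn | hkn
      · congr 1 <;> lia
      · rw [Nat.choose_eq_zero_of_lt (by lia), Nat.choose_eq_zero_of_lt (by lia)]

/-- left intervals of height `k ≥ 2` in `Tam^δ_n` are in bijection with
sequences `(P₀, P₁, …, P_k)` of Dyck words, `P₀` marked at one of its up steps, whose
sizes add up to `n - k`; in particular there are `binom (2n-k) (n+1)` of them. -/
theorem stmt18 (n k : ℕ) (hn : 1 ≤ n) (hk : 2 ≤ k) (δ : ℕ → ℤ) (hδ : IsIncFun δ) :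
    Nonempty (
      {pq : List Bool × List Bool // IsDyckWord n pq.1 ∧ IsDyckWord n pq.2 ∧
        ∃ A C B : List Bool,
          pq.1 = A ++ (List.replicate k false ++ (C ++ B)) ∧
          pq.2 = A ++ (C ++ (List.replicate k false ++ B)) ∧
          IsDeltaExcAt δ pq.1 (A.length + k) C} ≃
      {s : (List Bool × ℕ) × (Fin k → List Bool) //
        IsDyckPath s.1.1 ∧ s.1.1.getD s.1.2 false = true ∧
        (∀ j, IsDyckPath (s.2 j)) ∧
        s.1.1.count true + ∑ j, (s.2 j).count true = n - k}) ∧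
    {pq : List Bool × List Bool | IsDyckWord n pq.1 ∧ IsDyckWord n pq.2 ∧
        ∃ A C B : List Bool,
          pq.1 = A ++ (List.replicate k false ++ (C ++ B)) ∧
          pq.2 = A ++ (C ++ (List.replicate k false ++ B)) ∧
          IsDeltaExcAt δ pq.1 (A.length + k) C}.ncard
      = (2 * n - k).choose (n + 1) :=
  stmt18_general n (by lia) hδ
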